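/- For every natural number j and every homogeneous pair F in the model of C^∞(S^{1|1}), the graded Leibniz formula holds: D^j ∘ M_F = Σ_{i=0}^{j} (j choose i)_s · (−1)^{|F|(j−i)} · M_{D^i F} ∘ D^{j−i} as operators on pairs, where M_a denotes the multiplication operator M_a(G) = aG (using the pair product) and |F| ∈ {0,1} is the parity of F. -/

import Mathlib

open Real Function

/-- Model of C^∞(S^{1|1}): a pair (f₀, f₁) represents f₀(x) + θ f₁(x). -/
abbrev SPair : Type := (ℝ → ℝ) × (ℝ → ℝ)

/-- The odd vector field η̄ = ∂_θ − θ∂ₓ acting on pairs. -/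
noncomputable def D (F : SPair) : SPair :=
  (F.2, fun x => -deriv F.1 x)

/-- Product of super functions: (f₀ + θf₁)(g₀ + θg₁) = f₀g₀ + θ(f₀g₁ + f₁g₀). -/
def pmul (F G : SPair) : SPair :=
  (fun x => F.1 x * G.1 x, fun x => F.1 x * G.2 x + F.2 x * G.1 x)

/-- Membership in the model: both components smooth and 2π-periodic. -/
def InModel (F : SPair) : Prop :=
  ContDiff ℝ (⊤ : ℕ∞) F.1 ∧ ContDiff ℝ (⊤ : ℕ∞) F.2 ∧
    Periodic F.1 (2 * π) ∧ Periodic F.2 (2 * π)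

/-- F is homogeneous of parity p: even (p = 0) iff odd part vanishes,
odd (p = 1) iff even part vanishes. -/
def IsHom (F : SPair) (p : ℕ) : Prop :=
  (p = 0 ∧ F.2 = 0) ∨ (p = 1 ∧ F.1 = 0)

/-- The super binomial coefficient (j choose i)_s. -/
def sbinom (j i : ℕ) : ℕ :=
  if i % 2 = 0 ∨ j % 2 = 1 then Nat.choose (j / 2) (i / 2) else 0

/-- The Lie derivative 𝔏^λ_F of λ-densities along the contact field X_F,
for F = (f, k) (extended additively from the homogeneous cases). -/
noncomputable def Lder (l : ℝ) (F G : SPair) : SPair :=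
  (fun x => F.1 x * deriv G.1 x + l * deriv F.1 x * G.1 x
      + (1 / 2) * F.2 x * G.2 x,
   fun x => F.1 x * deriv G.2 x + (l + 1 / 2) * deriv F.1 x * G.2 x
      + (1 / 2) * F.2 x * deriv G.1 x + l * deriv F.2 x * G.1 x)

/-- The contact bracket {F, G}, extended bilinearly from the homogeneous
component formulas. -/
noncomputable def cbracket (F G : SPair) : SPair :=
  (fun x => F.1 x * deriv G.1 x - deriv F.1 x * G.1 x
      + (1 / 2) * F.2 x * G.2 x,
   fun x => F.1 x * deriv G.2 x - (1 / 2) * deriv F.1 x * G.2 x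
      + (1 / 2) * F.2 x * deriv G.1 x - deriv F.2 x * G.1 x)

/-! Write `σ(f₀ + θf₁) = f₀ - θf₁`. The graded product rule `D (FG) = (DF)G + (σF)(DG)` says that
`D` pulls back along multiplication to `X + Y`, where `X = D ⊗ 1` and `Y = σ ⊗ D`. Since `D`
and `σ` anticommute, so do `X` and `Y`; hence `(X + Y)² = X² + Y²` with commuting summands, and the
ordinary binomial theorem for `(X² + Y²)^⌊j/2⌋` yields the super binomial coefficients in
`(X + Y)^j = ∑ (j choose i)_s X^i Y^(j-i)`. On homogeneous `F`, `σ` acts by `(-1)^|F|`. -/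

section SuperBinomial

lemma sbinom_two_mul_two_mul (m k : ℕ) : sbinom (2 * m) (2 * k) = m.choose k := by
  simp [sbinom]

lemma sbinom_two_mul_two_mul_add_one (m k : ℕ) : sbinom (2 * m) (2 * k + 1) = 0 := by
  simp [sbinom, Nat.add_mod]

lemma sbinom_two_mul_add_one_two_mul (m k : ℕ) : sbinom (2 * m + 1) (2 * k) = m.choose k := by
  simp [sbinom, Nat.mul_add_div]

lemma sbinom_two_mul_add_one_two_mul_add_one (m k : ℕ) :
    sbinom (2 * m + 1) (2 * k + 1) = m.choose k := by
  simp [sbinom, Nat.add_mod, Nat.mul_add_div]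

lemma sum_range_two_mul {M : Type*} [AddCommMonoid M] (f : ℕ → M) (n : ℕ) :
    ∑ i ∈ Finset.range (2 * n), f i = ∑ k ∈ Finset.range n, (f (2 * k) + f (2 * k + 1)) := by
  induction n with
  | zero => simp
  | succ n ih =>
    rw [Nat.mul_succ, Finset.sum_range_succ, Finset.sum_range_succ, ih, Finset.sum_range_succ,
      add_assoc]

variable {A : Type*} [Ring A] {x y : A}

lemma commute_sq_left_of_anticommute (h : x * y = -(y * x)) : Commute (x ^ 2) y :=
  calc x ^ 2 * y = x * -(y * x) := by rw [sq, mul_assoc, h]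
    _ = -(x * y) * x := by rw [mul_neg, neg_mul, mul_assoc]
    _ = y * x ^ 2 := by rw [h, neg_neg, sq, mul_assoc]

lemma add_sq_of_anticommute (h : x * y = -(y * x)) : (x + y) ^ 2 = x ^ 2 + y ^ 2 := by
  rw [sq, mul_add, add_mul, add_mul, h, sq, sq]
  abel

lemma add_pow_two_mul_of_anticommute (h : x * y = -(y * x)) (m : ℕ) :
    (x + y) ^ (2 * m) =
      ∑ k ∈ Finset.range (m + 1), m.choose k • (x ^ (2 * k) * y ^ (2 * (m - k))) := by
  have hcomm : Commute (x ^ 2) (y ^ 2) := (commute_sq_left_of_anticommute h).pow_right 2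
  rw [pow_mul, add_sq_of_anticommute h, hcomm.add_pow]
  simp only [← pow_mul, nsmul_eq_mul']

lemma add_mul_pow_two_mul_mul_of_anticommute (h : x * y = -(y * x)) (k : ℕ) (z : A) :
    (x + y) * (x ^ (2 * k) * z) = x ^ (2 * k + 1) * z + x ^ (2 * k) * (y * z) := by
  have hcomm : Commute y (x ^ (2 * k)) := by
    rw [pow_mul]
    exact ((commute_sq_left_of_anticommute h).pow_left k).symm
  rw [add_mul, pow_succ', mul_assoc, ← mul_assoc y, hcomm.eq, mul_assoc]

theorem add_pow_of_anticommute (h : x * y = -(y * x)) (n : ℕ) :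
    (x + y) ^ n = ∑ i ∈ Finset.range (n + 1), sbinom n i • (x ^ i * y ^ (n - i)) := by
  obtain ⟨m, rfl | rfl⟩ := n.even_or_odd'
  · have sbinom_top : sbinom (2 * m) (2 * m + 1) = 0 := sbinom_two_mul_two_mul_add_one m m
    calc (x + y) ^ (2 * m)
        = ∑ i ∈ Finset.range (2 * (m + 1)), sbinom (2 * m) i • (x ^ i * y ^ (2 * m - i)) := by
          simp only [sum_range_two_mul, sbinom_two_mul_two_mul, sbinom_two_mul_two_mul_add_one,
            zero_smul, add_zero, ← Nat.mul_sub, add_pow_two_mul_of_anticommute h]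
      _ = _ := by rw [Nat.mul_succ, Finset.sum_range_succ, sbinom_top, zero_smul, add_zero]
  · rw [pow_succ', add_pow_two_mul_of_anticommute h, Finset.mul_sum,
      show 2 * m + 1 + 1 = 2 * (m + 1) by ring, sum_range_two_mul]
    refine Finset.sum_congr rfl fun k hk => ?_
    have hk : k ≤ m := Finset.mem_range_succ_iff.mp hk
    have hsub : 2 * m + 1 - 2 * k = 2 * (m - k) + 1 := by omega
    have hsub' : 2 * m + 1 - (2 * k + 1) = 2 * (m - k) := by omega
    rw [sbinom_two_mul_add_one_two_mul, sbinom_two_mul_add_one_two_mul_add_one, hsub, hsub',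
      mul_smul_comm, add_mul_pow_two_mul_mul_of_anticommute h, ← pow_succ', smul_add, add_comm]

end SuperBinomial

section TwistedDerivation

open scoped TensorProduct

variable {R M N P : Type*} [CommRing R] [AddCommGroup M] [AddCommGroup N] [AddCommGroup P]
  [Module R M] [Module R N] [Module R P]

theorem iterate_bilin_of_twisted_leibniz (μ : M →ₗ[R] N →ₗ[R] P) {d σ : Module.End R M}
    {d' : Module.End R N} {d'' : Module.End R P} (hanti : d * σ = -(σ * d))
    (hleibniz : ∀ a b, d'' (μ a b) = μ (d a) b + μ (σ a) (d' b)) (n : ℕ) (a : M) (b : N) :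
    d''^[n] (μ a b) =
      ∑ i ∈ Finset.range (n + 1), sbinom n i • μ (d^[i] (σ^[n - i] a)) (d'^[n - i] b) := by
  let X : Module.End R (M ⊗[R] N) := TensorProduct.map d 1
  let Y : Module.End R (M ⊗[R] N) := TensorProduct.map σ d'
  have hXY : X * Y = -(Y * X) := by
    simp only [X, Y, ← TensorProduct.map_mul, hanti, one_mul, mul_one]
    exact TensorProduct.ext' fun a b => by simp [TensorProduct.neg_tmul]
  have hpow (i k : ℕ) : X ^ i * Y ^ k = TensorProduct.map (d ^ i * σ ^ k) (d' ^ k) := by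
    rw [TensorProduct.map_pow, TensorProduct.map_pow, ← TensorProduct.map_mul, one_pow, one_mul]
  have hlift : d'' ∘ₗ TensorProduct.lift μ = TensorProduct.lift μ ∘ₗ (X + Y) :=
    TensorProduct.ext' fun a b => by simp [X, Y, hleibniz]
  calc d''^[n] (μ a b) = TensorProduct.lift μ (((X + Y) ^ n) (a ⊗ₜ b)) := by
        simpa [Module.End.pow_apply] using
          LinearMap.congr_fun (Module.End.commute_pow_left_of_commute hlift n) (a ⊗ₜ b)
    _ = _ := by
        simp only [add_pow_of_anticommute hXY, hpow, LinearMap.sum_apply, LinearMap.smul_apply,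
          map_sum, map_nsmul, TensorProduct.map_tmul, TensorProduct.lift.tmul,
          Module.End.mul_apply, Module.End.pow_apply]

end TwistedDerivation

section SuperFunctions

/-- The involution `f₀ + θf₁ ↦ f₀ - θf₁`, which records the parity of a homogeneous pair `F` as
the sign `(-1)^|F|` without requiring `F` to be homogeneous. -/
def parityInvolution : SPair →ₗ[ℝ] SPair :=
  LinearMap.prodMap LinearMap.id (-LinearMap.id)

lemma parityInvolution_apply (F : SPair) : parityInvolution F = (F.1, -F.2) := rfl

lemma IsHom.parityInvolution_eq {F : SPair} {p : ℕ} (hF : IsHom F p) :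
    parityInvolution F = (-1 : ℝ) ^ p • F := by
  obtain ⟨rfl, h⟩ | ⟨rfl, h⟩ := hF <;> ext <;> simp [parityInvolution_apply, h]

lemma IsHom.iterate_parityInvolution {F : SPair} {p : ℕ} (hF : IsHom F p) (n : ℕ) :
    parityInvolution^[n] F = (-1 : ℝ) ^ (p * n) • F := by
  induction n with
  | zero => simp
  | succ n ih =>
    rw [iterate_succ_apply', ih, map_smul, hF.parityInvolution_eq, smul_smul, ← pow_add,
      Nat.mul_succ]

lemma pmul_add (F G H : SPair) : pmul F (G + H) = pmul F G + pmul F H := by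
  ext x <;> simp [pmul] <;> ring

lemma add_pmul (F G H : SPair) : pmul (F + G) H = pmul F H + pmul G H := by
  ext x <;> simp [pmul] <;> ring

lemma pmul_smul (c : ℝ) (F G : SPair) : pmul F (c • G) = c • pmul F G := by
  ext x <;> simp [pmul] <;> ring

lemma smul_pmul (c : ℝ) (F G : SPair) : pmul (c • F) G = c • pmul F G := by
  ext x <;> simp [pmul] <;> ring

lemma D_add {F G : SPair} (hF : Differentiable ℝ F.1) (hG : Differentiable ℝ G.1) :
    D (F + G) = D F + D G := by
  ext x
  · rfl
  · simp [D, deriv_add (hF x) (hG x), add_comm]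

lemma D_smul (c : ℝ) (F : SPair) : D (c • F) = c • D F := by
  ext x
  · rfl
  · simp [D, deriv_const_smul_field]

lemma iterate_D_smul (c : ℝ) (F : SPair) (n : ℕ) : D^[n] (c • F) = c • D^[n] F :=
  Function.Commute.iterate_left (D_smul c) n F

lemma D_parityInvolution (F : SPair) : D (parityInvolution F) = -parityInvolution (D F) := by
  ext x <;> simp [D, parityInvolution_apply]

lemma D_pmul {F G : SPair} (hF : Differentiable ℝ F.1) (hG : Differentiable ℝ G.1) :
    D (pmul F G) = pmul (D F) G + pmul (parityInvolution F) (D G) := by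
  ext x
  · simp [D, pmul, parityInvolution_apply, add_comm]
  · simp [D, pmul, parityInvolution_apply, deriv_fun_mul (hF x) (hG x)]
    ring

/-- The space of smooth pairs `f₀ + θf₁`, on which `D` is linear and obeys the product rule. -/
def smoothPairs : Submodule ℝ SPair where
  carrier := {F | ContDiff ℝ (⊤ : ℕ∞) F.1 ∧ ContDiff ℝ (⊤ : ℕ∞) F.2}
  zero_mem' := ⟨contDiff_const, contDiff_const⟩
  add_mem' hF hG := ⟨hF.1.add hG.1, hF.2.add hG.2⟩
  smul_mem' _ _ hF := ⟨contDiff_const.smul hF.1, contDiff_const.smul hF.2⟩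

namespace smoothPairs

variable {F G : SPair}

lemma differentiable_fst (hF : F ∈ smoothPairs) : Differentiable ℝ F.1 :=
  hF.1.differentiable (by simp)

lemma D_mem (hF : F ∈ smoothPairs) : D F ∈ smoothPairs :=
  ⟨hF.2, (contDiff_infty_iff_deriv.mp hF.1).2.neg⟩

lemma pmul_mem (hF : F ∈ smoothPairs) (hG : G ∈ smoothPairs) : pmul F G ∈ smoothPairs :=
  ⟨hF.1.mul hG.1, (hF.1.mul hG.2).add (hF.2.mul hG.1)⟩

lemma parityInvolution_mem (hF : F ∈ smoothPairs) : parityInvolution F ∈ smoothPairs :=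
  ⟨hF.1, hF.2.neg⟩

/-- The vector field `η̄` as an endomorphism of the space of smooth pairs. -/
noncomputable def endD : Module.End ℝ smoothPairs where
  toFun F := ⟨D F, D_mem F.2⟩
  map_add' F G := Subtype.ext (D_add (differentiable_fst F.2) (differentiable_fst G.2))
  map_smul' c F := Subtype.ext (D_smul c F)

/-- The parity involution as an endomorphism of the space of smooth pairs. -/
def endParity : Module.End ℝ smoothPairs :=
  parityInvolution.restrict fun _ => parityInvolution_mem

/-- The product of super functions as a bilinear map on the space of smooth pairs. -/
def mulBilin : smoothPairs →ₗ[ℝ] smoothPairs →ₗ[ℝ] smoothPairs :=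
  LinearMap.mk₂ ℝ (fun F G => ⟨pmul F G, pmul_mem F.2 G.2⟩)
    (fun F G H => Subtype.ext (add_pmul F G H)) (fun c F G => Subtype.ext (smul_pmul c F G))
    (fun F G H => Subtype.ext (pmul_add F G H)) (fun c F G => Subtype.ext (pmul_smul c F G))

lemma coe_iterate_endD (n : ℕ) (F : smoothPairs) : (endD^[n] F : SPair) = D^[n] F :=
  Semiconj.iterate_right (f := Subtype.val) (fun _ => rfl) n F

lemma coe_iterate_endParity (n : ℕ) (F : smoothPairs) :
    (endParity^[n] F : SPair) = parityInvolution^[n] F :=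
  Semiconj.iterate_right (f := Subtype.val) (fun _ => rfl) n F

lemma endD_mul_endParity : endD * endParity = -(endParity * endD) :=
  LinearMap.ext fun F => Subtype.ext (D_parityInvolution F)

lemma endD_mulBilin (F G : smoothPairs) :
    endD (mulBilin F G) = mulBilin (endD F) G + mulBilin (endParity F) (endD G) :=
  Subtype.ext (D_pmul (differentiable_fst F.2) (differentiable_fst G.2))

end smoothPairs

lemma InModel.mem_smoothPairs {F : SPair} (hF : InModel F) : F ∈ smoothPairs :=
  ⟨hF.1, hF.2.1⟩

end SuperFunctions

theorem stmt7_general (j : ℕ) {F G : SPair} (hF : F ∈ smoothPairs) (hG : G ∈ smoothPairs) :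
    D^[j] (pmul F G) =
      ∑ i ∈ Finset.range (j + 1),
        (sbinom j i : ℝ) • pmul (D^[i] (parityInvolution^[j - i] F)) (D^[j - i] G) := by
  have h := congrArg Subtype.val <|
    iterate_bilin_of_twisted_leibniz smoothPairs.mulBilin smoothPairs.endD_mul_endParity
      smoothPairs.endD_mulBilin j ⟨F, hF⟩ ⟨G, hG⟩
  simpa [smoothPairs.coe_iterate_endD, smoothPairs.coe_iterate_endParity, smoothPairs.mulBilin,
    Nat.cast_smul_eq_nsmul] using h

/-- Graded Leibniz formula: η̄^j ∘ M_F = Σ_i (j choose i)_s (−1)^{|F|(j−i)}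
M_{η̄^i F} ∘ η̄^{j−i} on the model of C^∞(S^{1|1}). -/
theorem stmt7 (j : ℕ) (F : SPair) (pF : ℕ)
    (hFhom : IsHom F pF) (hFmod : InModel F)
    (G : SPair) (hGmod : InModel G) :
    D^[j] (pmul F G) =
      ∑ i ∈ Finset.range (j + 1),
        ((sbinom j i : ℝ) * (-1 : ℝ) ^ (pF * (j - i))) •
          pmul (D^[i] F) (D^[j - i] G) := by
  simp only [stmt7_general j hFmod.mem_smoothPairs hGmod.mem_smoothPairs,
    hFhom.iterate_parityInvolution, iterate_D_smul, smul_pmul, mul_smul]
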